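/- Let K be a field of characteristic zero and D ⊆ Δ⁺ a basic subset. Then I(V_D^∘) = I(Y_{w_D}^∘); equivalently, the basic cone V_D (the Zariski closure of the basic cell V_D^∘) coincides with Y_{w_D}, the Zariski closure of Y_{w_D}^∘. -/

import Mathlib

/-- A positive root `(i,j)`: `n ≥ i > j ≥ 1`. -/
def IsPosRoot (n : ℕ) (γ : ℕ × ℕ) : Prop := 1 ≤ γ.2 ∧ γ.2 < γ.1 ∧ γ.1 ≤ n

/-- `γ` is the sum of the roots `α` and `β` (in either order):
`(i,j) + (j,k) = (i,k)`. -/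
def RootSum (α β γ : ℕ × ℕ) : Prop :=
  (α.2 = β.1 ∧ γ = (α.1, β.2)) ∨ (β.2 = α.1 ∧ γ = (β.1, α.2))

/-- A basic subset: a set of positive roots with at most one root in each
row and at most one root in each column. -/
def IsBasic (n : ℕ) (D : Set (ℕ × ℕ)) : Prop :=
  (∀ γ ∈ D, IsPosRoot n γ) ∧
  (∀ α ∈ D, ∀ β ∈ D, α.1 = β.1 → α = β) ∧
  (∀ α ∈ D, ∀ β ∈ D, α.2 = β.2 → α = β)

/-- A positive root `α` is `D`-singular if `α + β ∈ D` for some positive root `β`. -/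
def IsSingular (n : ℕ) (D : Set (ℕ × ℕ)) (α : ℕ × ℕ) : Prop :=
  IsPosRoot n α ∧ ∃ β γ, IsPosRoot n β ∧ RootSum α β γ ∧ γ ∈ D

/-- `M(D) = R(D) \ D`, where `R(D)` is the set of `D`-regular positive roots. -/
def MD (n : ℕ) (D : Set (ℕ × ℕ)) : Set (ℕ × ℕ) :=
  {γ | IsPosRoot n γ ∧ ¬ IsSingular n D γ ∧ γ ∉ D}
/-- The list `[w_D(1), …, w_D(j)]`, defined recursively: `w_D(j)` is the
greatest `i ∈ {1,…,n}` with `(i,j) ∉ M(D)` and `i ∉ {w_D(1),…,w_D(j-1)}`. -/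
noncomputable def wDVals (n : ℕ) (D : Set (ℕ × ℕ)) : ℕ → List ℕ
  | 0 => []
  | j + 1 =>
    let prev := wDVals n D j
    prev ++ [sSup {i | 1 ≤ i ∧ i ≤ n ∧ (i, j + 1) ∉ MD n D ∧ i ∉ prev}]

/-- The permutation `w_D` associated with a basic subset `D` (as a map `ℕ → ℕ`,
meaningful on `{1,…,n}`). -/
noncomputable def wD (n : ℕ) (D : Set (ℕ × ℕ)) (j : ℕ) : ℕ :=
  ((wDVals n D j).getLast?).getD 0
open scoped Classical

/-- The variable set `{x_γ : γ ∈ Δ⁺}`: positive roots of `Δ⁺`. -/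
abbrev PRoot (n : ℕ) : Type := {γ : ℕ × ℕ // IsPosRoot n γ}

/-- A point `v : Δ⁺ → K` of `𝔫₋` realized as a strictly lower triangular
matrix (`1`-based roots, `0`-based matrix indices). -/
noncomputable def matOf (n : ℕ) (K : Type) [Field K] (v : PRoot n → K) :
    Matrix (Fin n) (Fin n) K :=
  fun a b =>
    if h : IsPosRoot n ((a : ℕ) + 1, (b : ℕ) + 1) then v ⟨((a : ℕ) + 1, (b : ℕ) + 1), h⟩
    else 0

/-- The point of `𝔫₋` given by the strictly lower triangular entries of a
matrix. -/
noncomputable def vecOf (n : ℕ) (K : Type) [Field K] (A : Matrix (Fin n) (Fin n) K)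
    (γ : PRoot n) : K :=
  A ⟨γ.1.1 - 1, by obtain ⟨h1, h2, h3⟩ := γ.2; omega⟩
    ⟨γ.1.2 - 1, by obtain ⟨h1, h2, h3⟩ := γ.2; omega⟩

/-- `π`: the strictly lower triangular part of a matrix. -/
def lowerPart (n : ℕ) (K : Type) [Field K] (A : Matrix (Fin n) (Fin n) K) :
    Matrix (Fin n) (Fin n) K :=
  fun a b => if (b : ℕ) < (a : ℕ) then A a b else 0

/-- Membership in `N = UT(n,K)`: upper triangular with units on the diagonal. -/
def IsUni (n : ℕ) (K : Type) [Field K] (g : Matrix (Fin n) (Fin n) K) : Prop :=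
  (∀ i : Fin n, g i i = 1) ∧ ∀ i j : Fin n, j < i → g i j = 0

/-- The element `X_{D,φ} = Σ_{ξ ∈ D} φ(ξ) E_ξ` of `𝔫₋`. -/
noncomputable def XDphi (n : ℕ) (K : Type) [Field K] (D : Set (ℕ × ℕ)) (φ : ℕ × ℕ → K) :
    Matrix (Fin n) (Fin n) K :=
  fun a b => if ((a : ℕ) + 1, (b : ℕ) + 1) ∈ D then φ ((a : ℕ) + 1, (b : ℕ) + 1) else 0

/-- The basic variety `V_{D,φ} = {π(g X_{D,φ} h) : g, h ∈ N}`, as a set of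
points of `𝔫₋`. -/
noncomputable def VDvar (n : ℕ) (K : Type) [Field K] (D : Set (ℕ × ℕ)) (φ : ℕ × ℕ → K) :
    Set (PRoot n → K) :=
  {v | ∃ g h : Matrix (Fin n) (Fin n) K, IsUni n K g ∧ IsUni n K h ∧
    v = vecOf n K (lowerPart n K (g * XDphi n K D φ * h))}

/-- The basic cell `V_D^∘ = ⋃_φ V_{D,φ}`, over all `φ : D → K ∖ {0}`. -/
noncomputable def VDcell (n : ℕ) (K : Type) [Field K] (D : Set (ℕ × ℕ)) :
    Set (PRoot n → K) :=
  {v | ∃ φ : ℕ × ℕ → K, (∀ γ ∈ D, φ γ ≠ 0) ∧ v ∈ VDvar n K D φ}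

/-- The vanishing ideal `I(S)` of a set of points `S`. -/
noncomputable def vanishing (σ K : Type) [Field K] (S : Set (σ → K)) :
    Ideal (MvPolynomial σ K) where
  carrier := {f | ∀ v ∈ S, MvPolynomial.eval v f = 0}
  add_mem' := by
    intro a b ha hb v hv
    simp [map_add, ha v hv, hb v hv]
  zero_mem' := by intro v hv; simp
  smul_mem' := by
    intro c f hf v hv
    simp [smul_eq_mul, hf v hv]
/-- Membership in the Borel subgroup `B` of invertible upper triangular matrices. -/
def InBorel {n : ℕ} {R : Type} [CommRing R] (b : Matrix (Fin n) (Fin n) R) : Prop :=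
  IsUnit b.det ∧ ∀ i j : Fin n, j < i → b i j = 0

/-- The permutation matrix `ẇ_D` of the permutation `w_D`. -/
noncomputable def wDMat (n : ℕ) (K : Type) [Field K] (D : Set (ℕ × ℕ)) :
    Matrix (Fin n) (Fin n) K :=
  fun a b => if ((a : ℕ) + 1) = wD n D ((b : ℕ) + 1) then 1 else 0

/-- `Y_{w_D}^∘ = {X ∈ 𝔫₋ : 1 + X ∈ B ẇ_D B}`, as a set of points of `𝔫₋`. -/
noncomputable def YwDCell (n : ℕ) (K : Type) [Field K] (D : Set (ℕ × ℕ)) :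
    Set (PRoot n → K) :=
  {v | ∃ b₁ b₂ : Matrix (Fin n) (Fin n) K, InBorel b₁ ∧ InBorel b₂ ∧
    1 + matOf n K v = b₁ * wDMat n K D * b₂}

/-!
For a Bruhat cell `B ẇ B` consider the map `A ↦ π(A)` taking the strictly lower triangular part.
Modulo upper triangular matrices, `ẇ_D` is the sum of the `E_ij` over `(i,j) ∈ D`, so this map sends
`B ẇ_D B` onto the basic cell; since it takes `1 + X` to `X`, also `Y_{w_D}^∘ ⊆ V_D^∘`. It remains
to see that `1 + π(A) ∈ B ẇ_D B` for generic `A = b ẇ_D c`. Up to the action of `B × B`, `1 + π(A)`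
is `Q = b⁻¹ (1 + π(A)) c⁻¹`, which differs from `ẇ_D` by an upper triangular matrix. If the leading
principal minors of `ẇ_D⁻¹ Q` do not vanish, then `Q = (ẇ_D L ẇ_D⁻¹) ẇ_D U` with `L` lower
unitriangular and `U` upper triangular, and the greedy choice in the definition of `w_D` makes
`ẇ_D L ẇ_D⁻¹` upper triangular. These minors are polynomials in `b` and `c` that do not vanish when
`A` is itself lower unitriangular, and such `A` exist: take for `b` the transposed matrix of values
of Newton's interpolation polynomials.
-/

/-! ### The permutation `w_D` -/

section Combinatorics

variable {n : ℕ} {D : Set (ℕ × ℕ)}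

theorem mem_MD_iff (hD : IsBasic n D) {i j : ℕ} :
    (i, j) ∈ MD n D ↔
      IsPosRoot n (i, j) ∧ (∀ k ≤ j, (i, k) ∉ D) ∧ ∀ k ≥ i, (k, j) ∉ D := by
  simp only [MD, IsSingular, Set.mem_ofPred_eq]
  refine and_congr_right fun hij => ?_
  constructor
  · rintro ⟨hs, hnot⟩
    refine ⟨fun k hk hkD => ?_, fun k hk hkD => ?_⟩
    · rcases hk.eq_or_lt with rfl | hk
      · exact hnot hkD
      · exact hs ⟨hij, (j, k), (i, k), ⟨(hD.1 _ hkD).1, hk, hij.2.1.le.trans hij.2.2⟩,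
          Or.inl ⟨rfl, rfl⟩, hkD⟩
    · rcases hk.eq_or_lt with rfl | hk
      · exact hnot hkD
      · exact hs ⟨hij, (k, i), (k, j), ⟨hij.1.trans hij.2.1.le, hk, (hD.1 _ hkD).2.2⟩,
          Or.inr ⟨rfl, rfl⟩, hkD⟩
  · rintro ⟨hrow, hcol⟩
    refine ⟨?_, hrow j le_rfl⟩
    rintro ⟨-, ⟨p, q⟩, _, hpq, ⟨rfl, rfl⟩ | ⟨rfl, rfl⟩, hγ⟩
    · exact hrow q hpq.2.1.le hγ
    · exact hcol p hpq.2.1.le hγ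

theorem notMem_MD_of_le {i j : ℕ} (h : i ≤ j) : (i, j) ∉ MD n D :=
  fun hM => h.not_gt hM.1.2.1

theorem wDVals_eq_map (n : ℕ) (D : Set (ℕ × ℕ)) (j : ℕ) :
    wDVals n D j = (List.range j).map fun k => wD n D (k + 1) := by
  induction j with
  | zero => rfl
  | succ j ih =>
    rw [List.range_succ, List.map_append, ← ih]
    simp [wD, wDVals]

/-- The rows among which `w_D(j + 1)` is the greatest. -/
def wDCandidates (n : ℕ) (D : Set (ℕ × ℕ)) (j : ℕ) : Set ℕ :=
  {i | 1 ≤ i ∧ i ≤ n ∧ (i, j + 1) ∉ MD n D ∧ ∀ k < j, wD n D (k + 1) ≠ i}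

theorem wDCandidates_nonempty {j : ℕ} (hj : j < n) : (wDCandidates n D j).Nonempty := by
  have hcard : ((Finset.range j).image fun k => wD n D (k + 1)).card <
      (Finset.Icc 1 (j + 1)).card := by
    refine Finset.card_image_le.trans_lt ?_
    rw [Finset.card_range, Nat.card_Icc]
    omega
  obtain ⟨i, hi, hnot⟩ := Finset.exists_mem_notMem_of_card_lt_card hcard
  rw [Finset.mem_Icc] at hi
  exact ⟨i, hi.1, by omega, notMem_MD_of_le hi.2,
    fun k hk h => hnot (Finset.mem_image.mpr ⟨k, Finset.mem_range.mpr hk, h⟩)⟩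

theorem isGreatest_wD {j : ℕ} (hj : j < n) :
    IsGreatest (wDCandidates n D j) (wD n D (j + 1)) := by
  have hwD : wD n D (j + 1) = sSup (wDCandidates n D j) := by
    have hmem : ∀ i, i ∉ wDVals n D j ↔ ∀ k < j, wD n D (k + 1) ≠ i := by
      simp [wDVals_eq_map]
    simp only [wDCandidates, ← hmem]
    simp [wD, wDVals]
  have hbdd : BddAbove (wDCandidates n D j) := ⟨n, fun _ hi => hi.2.1⟩
  rw [hwD]
  exact ⟨Nat.sSup_mem (wDCandidates_nonempty hj) hbdd, fun _ hi => le_csSup hbdd hi⟩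

theorem mem_iff_wD (hD : IsBasic n D) {j : ℕ} (hj : j < n) {i : ℕ} :
    (i, j + 1) ∈ D ↔ j + 1 < i ∧ wD n D (j + 1) = i := by
  induction j using Nat.strong_induction_on generalizing i with
  | _ j ih =>
  obtain ⟨⟨-, hwn, hwM, hwnew⟩, hmax⟩ := isGreatest_wD (D := D) hj
  -- By induction, a root of `D` further left in row `w_D(j + 1)` would have used up that row, so
  -- it must be a root in column `j + 1` that keeps `(w_D(j + 1), j + 1)` out of `M(D)`.
  have exists_below (hlt : j + 1 < wD n D (j + 1)) :
      ∃ d ≥ wD n D (j + 1), (d, j + 1) ∈ D := by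
    by_contra! hcol
    refine hwM ((mem_MD_iff hD).mpr ⟨⟨by omega, hlt, hwn⟩, fun k hk hkD => ?_, hcol⟩)
    rcases hk.eq_or_lt with rfl | hkj
    · exact hcol _ le_rfl hkD
    · obtain ⟨k, rfl⟩ := Nat.exists_eq_add_of_le' (hD.1 _ hkD).1
      exact hwnew k (by omega) ((ih k (by omega) (by omega)).mp hkD).2
  have wD_eq_of_mem {d : ℕ} (hd : (d, j + 1) ∈ D) : wD n D (j + 1) = d := by
    have hpos : IsPosRoot n (d, j + 1) := hD.1 _ hd
    have hjd : j + 1 < d := hpos.2.1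
    have hle : d ≤ wD n D (j + 1) := by
      refine hmax ⟨by omega, hpos.2.2, fun h => h.2.2 hd, fun k hk hkd => ?_⟩
      have hkD : (d, k + 1) ∈ D := (ih k hk (by omega)).mpr ⟨by omega, hkd⟩
      have := congrArg Prod.snd (hD.2.1 _ hkD _ hd rfl)
      simp only at this
      omega
    obtain ⟨d', hd', hd'D⟩ := exists_below (by omega)
    have : d' = d := congrArg Prod.fst (hD.2.2 _ hd'D _ hd rfl)
    omega
  refine ⟨fun h => ⟨(hD.1 _ h).2.1, wD_eq_of_mem h⟩, ?_⟩
  rintro ⟨hlt, rfl⟩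
  obtain ⟨d, -, hd⟩ := exists_below hlt
  rwa [wD_eq_of_mem hd]

theorem wD_injective (n : ℕ) (D : Set (ℕ × ℕ)) :
    Function.Injective fun j : Fin n => wD n D ((j : ℕ) + 1) := by
  refine Function.Injective.of_lt_imp_ne fun i j hij => ?_
  exact (isGreatest_wD j.2).1.2.2.2 i hij

/-- `w_D` as a permutation of the `0`-based indices. -/
noncomputable def wDPerm (n : ℕ) (D : Set (ℕ × ℕ)) : Equiv.Perm (Fin n) :=
  Equiv.ofBijective
    (fun j => ⟨wD n D ((j : ℕ) + 1) - 1, by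
      obtain ⟨h1, hn, -⟩ := (isGreatest_wD (D := D) j.2).1
      omega⟩)
    (Finite.injective_iff_bijective.mp fun i j hij => wD_injective n D (by
      have hi := (isGreatest_wD (D := D) i.2).1.1
      have hj := (isGreatest_wD (D := D) j.2).1.1
      have := Fin.ext_iff.mp hij
      simp only at this ⊢
      omega))

theorem wD_eq_wDPerm_add_one (j : Fin n) : wD n D ((j : ℕ) + 1) = (wDPerm n D j : ℕ) + 1 :=
  (Nat.sub_add_cancel (isGreatest_wD j.2).1.1).symm

theorem mem_iff_wDPerm (hD : IsBasic n D) (i j : Fin n) :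
    ((i : ℕ) + 1, (j : ℕ) + 1) ∈ D ↔ j < i ∧ wDPerm n D j = i := by
  rw [mem_iff_wD hD j.2, wD_eq_wDPerm_add_one, Fin.lt_def, Fin.ext_iff]
  omega

/-- No value `σ j ≤ i` with `i < j` exceeds `σ i`. This is what the greedy choice in the definition
of `w_D` amounts to, since values at most `i` are never excluded by `M(D)` in column `i`. -/
def IsGreedy (σ : Equiv.Perm (Fin n)) : Prop :=
  ∀ ⦃i j : Fin n⦄, i < j → σ j ≤ i → σ j < σ i

theorem isGreedy_wDPerm (n : ℕ) (D : Set (ℕ × ℕ)) : IsGreedy (wDPerm n D) := by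
  intro i j hij hji
  obtain ⟨h1, hn, -, hnew⟩ := (isGreatest_wD (D := D) j.2).1
  have hle : wD n D ((j : ℕ) + 1) ≤ wD n D ((i : ℕ) + 1) := by
    refine (isGreatest_wD i.2).2 ⟨h1, hn, notMem_MD_of_le ?_,
      fun k hk => hnew k (hk.trans hij)⟩
    rw [wD_eq_wDPerm_add_one]
    exact Nat.succ_le_succ hji
  rw [wD_eq_wDPerm_add_one, wD_eq_wDPerm_add_one, Nat.add_le_add_iff_right] at hle
  exact lt_of_le_of_ne hle ((wDPerm n D).injective.ne hij.ne')

end Combinatorics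

/-! ### Triangular matrices -/

section Triangular

variable {m R S : Type*} [LinearOrder m] [CommRing R] [CommRing S]

/-- `1 + π(A)`: the strictly lower triangular part of `A`, with ones on the diagonal. -/
def unitLower (A : Matrix m m R) : Matrix m m R :=
  fun i j => if j < i then A i j else if i = j then 1 else 0

theorem isUpperTriangular_unitLower_sub (A : Matrix m m R) :
    (unitLower A - A).IsUpperTriangular := fun i j hij => by
  rw [Matrix.sub_apply, sub_eq_zero]
  exact if_pos hij

theorem unitLower_eq_self {A : Matrix m m R} (hA : A.IsLowerTriangular) (hdiag : ∀ i, A i i = 1) :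
    unitLower A = A := by
  ext i j
  rcases lt_trichotomy i j with h | rfl | h
  · simp [unitLower, h.not_gt, h.ne, hA (OrderDual.toDual_lt_toDual.mpr h)]
  · simp [unitLower, hdiag]
  · simp [unitLower, h]

theorem mul_apply_diag_of_isUpperTriangular [Fintype m] {A B : Matrix m m R}
    (hA : A.IsUpperTriangular) (hB : B.IsUpperTriangular) (i : m) :
    (A * B) i i = A i i * B i i := by
  rw [Matrix.mul_apply]
  refine Finset.sum_eq_single_of_mem i (Finset.mem_univ i) fun k _ hk => ?_
  rcases hk.lt_or_gt with hk | hk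
  · rw [hA hk, zero_mul]
  · rw [hB hk, mul_zero]

variable [Fintype m]

theorem unitLower_map (φ : R →+* S) (A : Matrix m m R) :
    unitLower (φ.mapMatrix A) = φ.mapMatrix (unitLower A) := by
  ext i j
  simp only [unitLower, RingHom.mapMatrix_apply, Matrix.map_apply, apply_ite φ, map_one, map_zero]

/-- The leading principal minor of `M` on the indices up to and including `k`. -/
def leadingMinor (M : Matrix m m R) (k : m) : R :=
  (M.toSquareBlockProp (· ≤ k)).det

theorem leadingMinor_map (φ : R →+* S) (M : Matrix m m R) (k : m) :
    leadingMinor (φ.mapMatrix M) k = φ (leadingMinor M k) :=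
  (φ.map_det _).symm

theorem leadingMinor_smul_one (s : R) (k : m) :
    leadingMinor (s • (1 : Matrix m m R)) k = s ^ Fintype.card {i // i ≤ k} := by
  have h : (s • (1 : Matrix m m R)).toSquareBlockProp (· ≤ k) = s • 1 := by
    ext i j
    simp [Matrix.toSquareBlockProp, Matrix.one_apply, Subtype.ext_iff]
  rw [leadingMinor, h, Matrix.det_smul, Matrix.det_one, mul_one]

theorem exists_mul_isLowerTriangular_of_isUnit_leadingMinor {M : Matrix m m R}
    (hM : ∀ k, IsUnit (leadingMinor M k)) :
    ∃ U : Matrix m m R, IsUnit U.det ∧ U.IsUpperTriangular ∧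
      (M * U).IsLowerTriangular ∧ ∀ i, (M * U) i i = 1 := by
  -- Column `k` of `U` is the last column of the inverse of the `k`-th leading principal submatrix.
  let U : Matrix m m R := fun i k =>
    if h : i ≤ k then (M.toSquareBlockProp (· ≤ k))⁻¹ ⟨i, h⟩ ⟨k, le_rfl⟩ else 0
  have hMU {i k : m} (hik : i ≤ k) : (M * U) i k = if i = k then 1 else 0 := by
    calc (M * U) i k = ∑ c : {c // c ≤ k}, M i c * U c k := by
          rw [Matrix.mul_apply, ← Finset.sum_subtype (Finset.univ.filter (· ≤ k)) (by simp)
            fun c => M i c * U c k]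
          refine (Finset.sum_filter_of_ne fun c _ hc => ?_).symm
          by_contra hck
          exact hc (by simp only [U, dif_neg hck, mul_zero])
      _ = (M.toSquareBlockProp (· ≤ k) * (M.toSquareBlockProp (· ≤ k))⁻¹) ⟨i, hik⟩ ⟨k, le_rfl⟩ := by
          rw [Matrix.mul_apply]
          exact Finset.sum_congr rfl fun c _ => by simp [U, c.2, Matrix.toSquareBlockProp]
      _ = if i = k then 1 else 0 := by
          rw [Matrix.mul_nonsing_inv _ (hM k), Matrix.one_apply]
          simp only [Subtype.mk.injEq]
  have hlow : (M * U).IsLowerTriangular := fun i k hik => by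
    have hik : i < k := hik
    rw [hMU hik.le, if_neg hik.ne]
  have hdiag (i : m) : (M * U) i i = 1 := by rw [hMU le_rfl, if_pos rfl]
  have hdet : M.det * U.det = 1 := by
    rw [← Matrix.det_mul, Matrix.det_of_isLowerTriangular _ hlow]
    simp [hdiag]
  exact ⟨U, .of_mul_eq_one_right _ hdet, fun i k hik => dif_neg (not_le.mpr hik), hlow, hdiag⟩

end Triangular

section Borel

variable {n : ℕ} {R : Type} [CommRing R] {a b : Matrix (Fin n) (Fin n) R}

theorem inBorel_iff : InBorel a ↔ a.IsUpperTriangular ∧ ∀ i, IsUnit (a i i) := by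
  refine and_comm.trans (and_congr_right fun ha => ?_)
  rw [Matrix.det_of_isUpperTriangular ha, IsUnit.prod_univ_iff]

theorem InBorel.isUpperTriangular (ha : InBorel a) : a.IsUpperTriangular :=
  (inBorel_iff.mp ha).1

theorem InBorel.mul (ha : InBorel a) (hb : InBorel b) : InBorel (a * b) :=
  ⟨by rw [Matrix.det_mul]; exact ha.1.mul hb.1, ha.isUpperTriangular.mul hb.isUpperTriangular⟩

theorem InBorel.inv (ha : InBorel a) : InBorel a⁻¹ := by
  have := Matrix.invertibleOfIsUnitDet a ha.1
  exact ⟨Matrix.isUnit_nonsing_inv_det a ha.1,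
    Matrix.blockTriangular_inv_of_blockTriangular ha.isUpperTriangular⟩

theorem InBorel.adjugate (ha : InBorel a) : InBorel a.adjugate := by
  have h : a.adjugate = a.det • a⁻¹ := by
    rw [Matrix.inv_def, smul_smul, Ring.mul_inverse_cancel _ ha.1, one_smul]
  refine ⟨?_, fun i j hij => by rw [h, Matrix.smul_apply, ha.inv.2 i j hij, smul_zero]⟩
  rw [Matrix.det_adjugate]
  exact ha.1.pow _

end Borel

/-! ### Bruhat cells -/

section Bruhat

variable {n : ℕ} {R S : Type} [CommRing R] [CommRing S] {σ : Equiv.Perm (Fin n)}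
  {p q M : Matrix (Fin n) (Fin n) R}

/-- The matrix `σ̇` of the permutation `σ`, with its ones in the positions `(σ j, j)`; Mathlib's
`Equiv.Perm.permMatrix` has them in the positions `(j, σ j)`. -/
abbrev dotMatrix (R : Type) [CommRing R] (σ : Equiv.Perm (Fin n)) : Matrix (Fin n) (Fin n) R :=
  σ⁻¹.permMatrix R

theorem dotMatrix_apply (i j : Fin n) : dotMatrix R σ i j = if i = σ j then 1 else 0 := by
  refine (PEquiv.toMatrix_apply _ i j).trans ?_
  simp [Equiv.eq_symm_apply, eq_comm]

theorem mul_dotMatrix (M : Matrix (Fin n) (Fin n) R) : M * dotMatrix R σ = M.submatrix id σ :=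
  PEquiv.mul_toMatrix_toPEquiv M σ⁻¹

theorem dotMatrix_map (φ : R →+* S) : φ.mapMatrix (dotMatrix R σ) = dotMatrix S σ :=
  PEquiv.map_toMatrix φ _

/-- The Bruhat cell `B σ̇ B`. -/
def bruhatCell (R : Type) [CommRing R] (σ : Equiv.Perm (Fin n)) : Set (Matrix (Fin n) (Fin n) R) :=
  {A | ∃ b c, InBorel b ∧ InBorel c ∧ A = b * dotMatrix R σ * c}

theorem mem_bruhatCell_of_mul_mul_mem (hp : InBorel p) (hq : InBorel q)
    (h : p * M * q ∈ bruhatCell R σ) : M ∈ bruhatCell R σ := by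
  obtain ⟨b, c, hb, hc, hM⟩ := h
  refine ⟨p⁻¹ * b, c * q⁻¹, hp.inv.mul hb, hc.mul hq.inv, ?_⟩
  calc M = p⁻¹ * (p * M * q) * q⁻¹ := by
        rw [← Matrix.mul_assoc, ← Matrix.mul_assoc, Matrix.nonsing_inv_mul _ hp.1, Matrix.one_mul,
          Matrix.mul_nonsing_inv_cancel_right _ _ hq.1]
    _ = p⁻¹ * b * dotMatrix R σ * (c * q⁻¹) := by
        rw [hM]
        simp only [Matrix.mul_assoc]

theorem isUpperTriangular_submatrix_symm_of_isGreedy (hσ : IsGreedy σ) {s : R}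
    {U : Matrix (Fin n) (Fin n) R} (hM : (M - s • dotMatrix R σ).IsUpperTriangular)
    (hU : U.IsUpperTriangular) (hlow : (M.submatrix σ id * U).IsLowerTriangular) :
    ((M.submatrix σ id * U).submatrix σ.symm σ.symm).IsUpperTriangular := by
  have hM_zero {i j : Fin n} (hj : j < σ i) (hij : i ≠ j) : M (σ i) j = 0 := by
    have := hM hj
    rwa [Matrix.sub_apply, Matrix.smul_apply, dotMatrix_apply, if_neg (σ.injective.ne hij),
      smul_zero, sub_zero] at this
  intro i j hij
  obtain ⟨a, rfl⟩ := σ.surjective i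
  obtain ⟨b, rfl⟩ := σ.surjective j
  simp only [id] at hij
  simp only [Matrix.submatrix_apply, Equiv.symm_apply_apply]
  rcases lt_trichotomy a b with hab | rfl | hba
  · exact hlow hab
  · exact absurd hij (lt_irrefl _)
  · have hb : b < σ a := by
      by_contra! h
      exact hij.not_gt (hσ hba h)
    rw [Matrix.mul_apply]
    refine Finset.sum_eq_zero fun k _ => ?_
    rcases lt_or_ge b k with hk | hk
    · rw [hU hk, mul_zero]
    · rw [Matrix.submatrix_apply, id, hM_zero (hk.trans_lt hb) (hk.trans_lt hba).ne', zero_mul]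

theorem mem_bruhatCell_of_isUnit_leadingMinor (hσ : IsGreedy σ) {s : R}
    (hM : (M - s • dotMatrix R σ).IsUpperTriangular)
    (hminor : ∀ k, IsUnit (leadingMinor (M.submatrix σ id) k)) : M ∈ bruhatCell R σ := by
  obtain ⟨U, hUdet, hU, hlow, hdiag⟩ := exists_mul_isLowerTriangular_of_isUnit_leadingMinor hminor
  have hMU : M * U = (M.submatrix σ id * U).submatrix σ.symm id := by
    ext i j
    simp [Matrix.mul_apply]
  refine ⟨(M.submatrix σ id * U).submatrix σ.symm σ.symm, U⁻¹,
    inBorel_iff.mpr ⟨isUpperTriangular_submatrix_symm_of_isGreedy hσ hM hU hlow, fun i => ?_⟩,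
    InBorel.inv ⟨hUdet, hU⟩, ?_⟩
  · rw [Matrix.submatrix_apply, hdiag]
    exact isUnit_one
  · rw [mul_dotMatrix, Matrix.submatrix_submatrix, Equiv.symm_comp_self, Function.comp_id, ← hMU,
      Matrix.mul_nonsing_inv_cancel_right _ _ hUdet]

end Bruhat

/-! ### Lower unitriangular points of Bruhat cells -/

section Newton

open Matrix

variable {n : ℕ} {K : Type} [Field K]

/-- The polynomial `∏_{k < j} (X - x_k)` of degree `j` from the Newton basis for the nodes `x`. -/
noncomputable def newtonPoly (x : Fin n → K) (j : Fin n) : Polynomial K :=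
  Lagrange.nodal (Finset.Iio j) x

theorem natDegree_newtonPoly (x : Fin n → K) (j : Fin n) : (newtonPoly x j).natDegree = j := by
  rw [newtonPoly, Lagrange.natDegree_nodal, Fin.card_Iio]

/-- The coefficients of the Newton basis. -/
noncomputable def newtonCoeff (x : Fin n → K) : Matrix (Fin n) (Fin n) K :=
  of fun i j => (newtonPoly x j).coeff i

/-- The values of the Newton basis at the nodes. -/
noncomputable def newtonValue (x : Fin n → K) : Matrix (Fin n) (Fin n) K :=
  of fun i j => (newtonPoly x j).eval (x i)

theorem newtonValue_eq_vandermonde_mul (x : Fin n → K) :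
    newtonValue x = vandermonde x * newtonCoeff x :=
  eval_matrixOfPolynomials_eq_vandermonde_mul_matrixOfPolynomials x _
    fun j => (natDegree_newtonPoly x j).le

theorem isUpperTriangular_newtonCoeff (x : Fin n → K) : (newtonCoeff x).IsUpperTriangular :=
  matrixOfPolynomials_blockTriangular _ fun j => (natDegree_newtonPoly x j).le

theorem newtonCoeff_diag (x : Fin n → K) (i : Fin n) : newtonCoeff x i i = 1 := by
  have h : (newtonPoly x i).Monic := Lagrange.nodal_monic
  rw [newtonCoeff, of_apply, ← h.coeff_natDegree, natDegree_newtonPoly]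

theorem inBorel_newtonCoeff (x : Fin n → K) : InBorel (newtonCoeff x) :=
  inBorel_iff.mpr ⟨isUpperTriangular_newtonCoeff x, fun i => by simp [newtonCoeff_diag]⟩

theorem inBorel_transpose_newtonValue {x : Fin n → K} (hx : Function.Injective x) :
    InBorel (newtonValue x)ᵀ := by
  refine inBorel_iff.mpr ⟨fun i j hij => ?_, fun i => isUnit_iff_ne_zero.mpr ?_⟩
  · exact Lagrange.eval_nodal_at_node (Finset.mem_Iio.mpr hij)
  · exact Lagrange.eval_nodal_not_at_node fun k hk => hx.ne (Finset.mem_Iio.mp hk).ne'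

theorem unitLower_transpose_newtonCoeff_inv_mul (x y : Fin n → K) :
    unitLower ((newtonCoeff y)⁻¹ * newtonCoeff x)ᵀ = ((newtonCoeff y)⁻¹ * newtonCoeff x)ᵀ := by
  have hinv : (newtonCoeff y)⁻¹.IsUpperTriangular := (inBorel_newtonCoeff y).inv.isUpperTriangular
  have hx := isUpperTriangular_newtonCoeff x
  refine unitLower_eq_self (fun i j hij => (hinv.mul hx) hij) fun i => ?_
  have hdiag := mul_apply_diag_of_isUpperTriangular (isUpperTriangular_newtonCoeff y) hinv i
  rw [mul_nonsing_inv _ (inBorel_newtonCoeff y).1, one_apply_eq, newtonCoeff_diag, one_mul] at hdiag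
  rw [transpose_apply, mul_apply_diag_of_isUpperTriangular hinv hx, ← hdiag, newtonCoeff_diag,
    one_mul]

theorem exists_unitLower_eq_self [Infinite K] (σ : Equiv.Perm (Fin n)) :
    ∃ b c : Matrix (Fin n) (Fin n) K, InBorel b ∧ InBorel c ∧
      unitLower (b * dotMatrix K σ * c) = b * dotMatrix K σ * c := by
  let x : Fin n → K := fun i => Infinite.natEmbedding K i
  have hx : Function.Injective x := (Infinite.natEmbedding K).injective.comp Fin.val_injective
  let y : Fin n → K := x ∘ σ
  have hb := inBorel_transpose_newtonValue hx
  have hc := inBorel_transpose_newtonValue (hx.comp σ.injective)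
  refine ⟨(newtonValue x)ᵀ, (newtonValue y)ᵀ⁻¹, hb, hc.inv, ?_⟩
  have hprod : (newtonValue x)ᵀ * dotMatrix K σ =
      ((newtonCoeff y)⁻¹ * newtonCoeff x)ᵀ * (newtonValue y)ᵀ := by
    rw [← transpose_mul, newtonValue_eq_vandermonde_mul y, Matrix.mul_assoc,
      mul_nonsing_inv_cancel_left _ _ (inBorel_newtonCoeff y).1, mul_dotMatrix,
      newtonValue_eq_vandermonde_mul x]
    rfl
  rw [hprod, mul_nonsing_inv_cancel_right _ _ hc.1, unitLower_transpose_newtonCoeff_inv_mul]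

end Newton

/-! ### Density -/

section Density

variable {n : ℕ} {R S K : Type} [CommRing R] [CommRing S] [Field K] {σ : Equiv.Perm (Fin n)}

theorem adjugate_mul_mul_mul_adjugate (P M Q : Matrix (Fin n) (Fin n) R) :
    P.adjugate * (P * M * Q) * Q.adjugate = (P.det * Q.det) • M := by
  rw [Matrix.mul_assoc P, ← Matrix.mul_assoc P.adjugate, Matrix.adjugate_mul, Matrix.mul_assoc,
    Matrix.mul_assoc, Matrix.mul_adjugate]
  simp [smul_smul, mul_comm]

/-- The translate of `1 + π(b σ̇ c)` which differs from a multiple of `σ̇` by an upper triangular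
matrix; adjugates replace the inverses to keep its entries polynomial in those of `b` and `c`. -/
def cellTranslate (σ : Equiv.Perm (Fin n)) (b c : Matrix (Fin n) (Fin n) R) :
    Matrix (Fin n) (Fin n) R :=
  b.adjugate * unitLower (b * dotMatrix R σ * c) * c.adjugate

/-- The polynomial in the entries of `b` and `c` whose nonvanishing ensures that `1 + π(b σ̇ c)`
lies in the Bruhat cell of `σ`. -/
def cellMinor (σ : Equiv.Perm (Fin n)) (b c : Matrix (Fin n) (Fin n) R) : R :=
  b.det * c.det * ∏ k, leadingMinor ((cellTranslate σ b c).submatrix σ id) k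

theorem cellMinor_map (φ : R →+* S) (b c : Matrix (Fin n) (Fin n) R) :
    cellMinor σ (φ.mapMatrix b) (φ.mapMatrix c) = φ (cellMinor σ b c) := by
  have h : cellTranslate σ (φ.mapMatrix b) (φ.mapMatrix c) =
      φ.mapMatrix (cellTranslate σ b c) := by
    simp only [cellTranslate, map_mul, RingHom.map_adjugate, ← unitLower_map, dotMatrix_map]
  simp only [cellMinor, map_mul, map_prod, RingHom.map_det, h, ← leadingMinor_map]
  rfl

theorem unitLower_mem_bruhatCell (hσ : IsGreedy σ) {b c : Matrix (Fin n) (Fin n) R}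
    (hb : b.IsUpperTriangular) (hc : c.IsUpperTriangular) (h : IsUnit (cellMinor σ b c)) :
    unitLower (b * dotMatrix R σ * c) ∈ bruhatCell R σ := by
  rw [cellMinor, IsUnit.mul_iff, IsUnit.mul_iff, IsUnit.prod_univ_iff] at h
  obtain ⟨⟨hbdet, hcdet⟩, hminor⟩ := h
  have hb' : InBorel b.adjugate := InBorel.adjugate ⟨hbdet, hb⟩
  have hc' : InBorel c.adjugate := InBorel.adjugate ⟨hcdet, hc⟩
  refine mem_bruhatCell_of_mul_mul_mem hb' hc'
    (mem_bruhatCell_of_isUnit_leadingMinor hσ (s := b.det * c.det) ?_ hminor)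
  rw [← adjugate_mul_mul_mul_adjugate, ← Matrix.sub_mul, ← Matrix.mul_sub]
  exact (hb'.isUpperTriangular.mul (isUpperTriangular_unitLower_sub _)).mul hc'.isUpperTriangular

theorem isUnit_cellMinor {b c : Matrix (Fin n) (Fin n) R} (hb : IsUnit b.det) (hc : IsUnit c.det)
    (h : unitLower (b * dotMatrix R σ * c) = b * dotMatrix R σ * c) :
    IsUnit (cellMinor σ b c) := by
  refine (hb.mul hc).mul (IsUnit.prod_univ_iff.mpr fun k => ?_)
  have hs : (cellTranslate σ b c).submatrix σ id = (b.det * c.det) • 1 := by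
    ext i j
    simp only [cellTranslate, h, adjugate_mul_mul_mul_adjugate, Matrix.submatrix_apply, id,
      Matrix.smul_apply, dotMatrix_apply, Matrix.one_apply, σ.injective.eq_iff]
  rw [hs, leadingMinor_smul_one]
  exact (hb.mul hc).pow _

/-- The line through `p` and `q`, as a matrix of polynomials in the parameter. -/
noncomputable def polyLine (p q : Matrix (Fin n) (Fin n) R) :
    Matrix (Fin n) (Fin n) (Polynomial R) :=
  AffineMap.lineMap (p.map Polynomial.C) (q.map Polynomial.C) (Polynomial.X : Polynomial R)

theorem mapMatrix_polyLine (p q : Matrix (Fin n) (Fin n) R) (t : R) :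
    (Polynomial.evalRingHom t).mapMatrix (polyLine p q) = AffineMap.lineMap p q t := by
  ext i j
  simp [polyLine, AffineMap.lineMap_apply_module']

theorem isUpperTriangular_lineMap {p q : Matrix (Fin n) (Fin n) R} (hp : p.IsUpperTriangular)
    (hq : q.IsUpperTriangular) (t : R) : (AffineMap.lineMap p q t).IsUpperTriangular :=
  fun i j hij => by simp [AffineMap.lineMap_apply_module', hp hij, hq hij]

theorem exists_polynomial_eval_eq {ι : Type*} (u : ι → Polynomial R) (f : MvPolynomial ι R) :
    ∃ F : Polynomial R, ∀ t, F.eval t = MvPolynomial.eval (fun i => (u i).eval t) f := by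
  refine ⟨MvPolynomial.aeval u f, fun t => ?_⟩
  rw [← Polynomial.coe_aeval_eq_eval, MvPolynomial.comp_aeval_apply]
  rfl

theorem eval_eq_zero_of_mem_bruhatCell [Infinite K] (hσ : IsGreedy σ)
    {f : MvPolynomial (Fin n × Fin n) K}
    (hf : ∀ A : Matrix (Fin n) (Fin n) K, unitLower A ∈ bruhatCell K σ →
      f.eval (fun p => A p.1 p.2) = 0)
    {A : Matrix (Fin n) (Fin n) K} (hA : A ∈ bruhatCell K σ) :
    f.eval (fun p => A p.1 p.2) = 0 := by
  obtain ⟨b, c, hb, hc, rfl⟩ := hA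
  obtain ⟨b₁, c₁, hb₁, hc₁, hfix⟩ := exists_unitLower_eq_self (K := K) σ
  let bt (t : K) : Matrix (Fin n) (Fin n) K := AffineMap.lineMap b b₁ t
  let ct (t : K) : Matrix (Fin n) (Fin n) K := AffineMap.lineMap c c₁ t
  obtain ⟨P, hP⟩ : ∃ P : Polynomial K, ∀ t, P.eval t = cellMinor σ (bt t) (ct t) := by
    refine ⟨cellMinor σ (polyLine b b₁) (polyLine c c₁), fun t => ?_⟩
    rw [← Polynomial.coe_evalRingHom, ← cellMinor_map, mapMatrix_polyLine, mapMatrix_polyLine]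
  obtain ⟨F, hF⟩ : ∃ F : Polynomial K, ∀ t,
      F.eval t = f.eval (fun p => (bt t * dotMatrix K σ * ct t) p.1 p.2) := by
    obtain ⟨F, hF⟩ := exists_polynomial_eval_eq
      (fun p => (polyLine b b₁ * dotMatrix (Polynomial K) σ * polyLine c c₁) p.1 p.2) f
    refine ⟨F, fun t => ?_⟩
    simp only [hF, bt, ct, ← mapMatrix_polyLine, ← dotMatrix_map (Polynomial.evalRingHom t),
      ← map_mul]
    rfl
  have hPF : P * F = 0 := Polynomial.funext fun t => by
    rw [Polynomial.eval_mul, Polynomial.eval_zero, mul_eq_zero, or_iff_not_imp_left, hP, hF]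
    exact fun h => hf _ (unitLower_mem_bruhatCell hσ
      (isUpperTriangular_lineMap hb.isUpperTriangular hb₁.isUpperTriangular t)
      (isUpperTriangular_lineMap hc.isUpperTriangular hc₁.isUpperTriangular t)
      (isUnit_iff_ne_zero.mpr h))
  have hP0 : P ≠ 0 := by
    rintro rfl
    refine (isUnit_cellMinor hb₁.1 hc₁.1 hfix).ne_zero ?_
    simpa [bt, ct] using (hP 1).symm
  have hF0 : F = 0 := (mul_eq_zero.mp hPF).resolve_left hP0
  simpa [bt, ct, hF0] using (hF 0).symm

end Density

/-! ### The cells -/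

section Cells

open Matrix

variable {n : ℕ} {K : Type} [Field K] {D : Set (ℕ × ℕ)} {σ : Equiv.Perm (Fin n)}
  {b g : Matrix (Fin n) (Fin n) K}

theorem inBorel_diagonal {s : Fin n → K} (hs : ∀ i, s i ≠ 0) : InBorel (diagonal s) :=
  inBorel_iff.mpr ⟨blockTriangular_diagonal s, fun i => by simpa using hs i⟩

theorem IsUni.inBorel (hg : IsUni n K g) : InBorel g :=
  inBorel_iff.mpr ⟨hg.2, fun i => by simp [hg.1 i]⟩

theorem InBorel.exists_isUni_mul_diagonal (hb : InBorel b) :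
    ∃ g s, IsUni n K g ∧ (∀ i, s i ≠ 0) ∧ b = g * diagonal s := by
  have hs (i : Fin n) : b i i ≠ 0 := ((inBorel_iff.mp hb).2 i).ne_zero
  refine ⟨b * diagonal fun i => (b i i)⁻¹, fun i => b i i, ⟨fun i => ?_, fun i j hij => ?_⟩, hs, ?_⟩
  · rw [mul_diagonal, mul_inv_cancel₀ (hs i)]
  · rw [mul_diagonal, hb.2 i j hij, zero_mul]
  · rw [Matrix.mul_assoc, diagonal_mul_diagonal]
    simp [hs]

theorem InBorel.exists_diagonal_mul_isUni (hb : InBorel b) :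
    ∃ s g, (∀ i, s i ≠ 0) ∧ IsUni n K g ∧ b = diagonal s * g := by
  have hs (i : Fin n) : b i i ≠ 0 := ((inBorel_iff.mp hb).2 i).ne_zero
  refine ⟨fun i => b i i, diagonal (fun i => (b i i)⁻¹) * b, hs,
    ⟨fun i => ?_, fun i j hij => ?_⟩, ?_⟩
  · rw [diagonal_mul, inv_mul_cancel₀ (hs i)]
  · rw [diagonal_mul, hb.2 i j hij, mul_zero]
  · rw [← Matrix.mul_assoc, diagonal_mul_diagonal]
    simp [hs]

theorem dotMatrix_mul_diagonal (s : Fin n → K) :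
    dotMatrix K σ * diagonal s = diagonal (s ∘ σ.symm) * dotMatrix K σ := by
  ext i j
  rw [mul_diagonal, diagonal_mul, dotMatrix_apply]
  split_ifs with h
  · simp [h]
  · simp

theorem mem_bruhatCell_iff_exists_isUni {A : Matrix (Fin n) (Fin n) K} :
    A ∈ bruhatCell K σ ↔ ∃ g h s, IsUni n K g ∧ IsUni n K h ∧ (∀ i, s i ≠ 0) ∧
      A = g * (diagonal s * dotMatrix K σ) * h := by
  constructor
  · rintro ⟨b, c, hb, hc, rfl⟩
    obtain ⟨g, s, hg, hs, rfl⟩ := hb.exists_isUni_mul_diagonal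
    obtain ⟨t, h, ht, hh, rfl⟩ := hc.exists_diagonal_mul_isUni
    refine ⟨g, h, s * (t ∘ σ.symm), hg, hh, fun i => mul_ne_zero (hs i) (ht _), ?_⟩
    calc g * diagonal s * dotMatrix K σ * (diagonal t * h)
        = g * (diagonal s * (dotMatrix K σ * diagonal t)) * h := by simp only [Matrix.mul_assoc]
      _ = g * (diagonal (s * (t ∘ σ.symm)) * dotMatrix K σ) * h := by
        rw [dotMatrix_mul_diagonal, ← Matrix.mul_assoc (diagonal s), diagonal_mul_diagonal']
        rfl
  · rintro ⟨g, h, s, hg, hh, hs, rfl⟩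
    exact ⟨g * diagonal s, h, hg.inBorel.mul (inBorel_diagonal hs), hh.inBorel,
      by simp only [Matrix.mul_assoc]⟩

theorem vecOf_eq_of_isUpperTriangular_sub {A B : Matrix (Fin n) (Fin n) K}
    (h : (A - B).IsUpperTriangular) : vecOf n K A = vecOf n K B := by
  funext ⟨⟨i, j⟩, hγ⟩
  obtain ⟨hj, hji, -⟩ := hγ
  exact sub_eq_zero.mp (h (Fin.mk_lt_mk.mpr (Nat.sub_lt_sub_right hj hji)))

theorem vecOf_lowerPart (A : Matrix (Fin n) (Fin n) K) :
    vecOf n K (lowerPart n K A) = vecOf n K A :=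
  vecOf_eq_of_isUpperTriangular_sub fun _ _ hij => sub_eq_zero.mpr (if_pos hij)

theorem vecOf_mul_mul_congr {g h A B : Matrix (Fin n) (Fin n) K} (hg : g.IsUpperTriangular)
    (hh : h.IsUpperTriangular) (hAB : (A - B).IsUpperTriangular) :
    vecOf n K (g * A * h) = vecOf n K (g * B * h) := by
  refine vecOf_eq_of_isUpperTriangular_sub ?_
  rw [← Matrix.sub_mul, ← Matrix.mul_sub]
  exact (hg.mul hAB).mul hh

theorem isUpperTriangular_diagonal_mul_dotMatrix_sub_XDphi
    (hDσ : ∀ i j : Fin n, ((i : ℕ) + 1, (j : ℕ) + 1) ∈ D ↔ j < i ∧ σ j = i)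
    {s : Fin n → K} {φ : ℕ × ℕ → K}
    (hsφ : ∀ i j : Fin n, ((i : ℕ) + 1, (j : ℕ) + 1) ∈ D → s i = φ ((i : ℕ) + 1, (j : ℕ) + 1)) :
    (diagonal s * dotMatrix K σ - XDphi n K D φ).IsUpperTriangular := fun i j hij => by
  rw [Matrix.sub_apply, sub_eq_zero, diagonal_mul, dotMatrix_apply, XDphi]
  by_cases h : σ j = i
  · have hD := (hDσ i j).mpr ⟨hij, h⟩
    rw [if_pos h.symm, if_pos hD, mul_one, hsφ i j hD]
  · rw [if_neg (Ne.symm h), if_neg fun hD => h ((hDσ i j).mp hD).2, mul_zero]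

theorem VDcell_eq_image_bruhatCell
    (hDσ : ∀ i j : Fin n, ((i : ℕ) + 1, (j : ℕ) + 1) ∈ D ↔ j < i ∧ σ j = i) :
    VDcell n K D = vecOf n K '' bruhatCell K σ := by
  ext v
  constructor
  · rintro ⟨φ, hφ, g, h, hg, hh, rfl⟩
    let s (i : Fin n) : K :=
      if ((i : ℕ) + 1, (σ.symm i : ℕ) + 1) ∈ D then φ ((i : ℕ) + 1, (σ.symm i : ℕ) + 1) else 1
    have hs (i : Fin n) : s i ≠ 0 := by
      simp only [s]
      split_ifs with hi
      exacts [hφ _ hi, one_ne_zero]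
    have hsφ (i j : Fin n) (hij : ((i : ℕ) + 1, (j : ℕ) + 1) ∈ D) :
        s i = φ ((i : ℕ) + 1, (j : ℕ) + 1) := by
      obtain rfl : σ.symm i = j := σ.symm_apply_eq.mpr ((hDσ i j).mp hij).2.symm
      exact if_pos hij
    refine ⟨_, mem_bruhatCell_iff_exists_isUni.mpr ⟨g, h, s, hg, hh, hs, rfl⟩, ?_⟩
    rw [vecOf_lowerPart]
    exact vecOf_mul_mul_congr hg.2 hh.2
      (isUpperTriangular_diagonal_mul_dotMatrix_sub_XDphi hDσ hsφ)
  · rintro ⟨A, hA, rfl⟩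
    obtain ⟨g, h, s, hg, hh, hs, rfl⟩ := mem_bruhatCell_iff_exists_isUni.mp hA
    let φ (γ : ℕ × ℕ) : K := if h : γ.1 - 1 < n then s ⟨γ.1 - 1, h⟩ else 1
    have hφ (γ : ℕ × ℕ) : φ γ ≠ 0 := by
      simp only [φ]
      split_ifs
      exacts [hs _, one_ne_zero]
    refine ⟨φ, fun γ _ => hφ γ, g, h, hg, hh, ?_⟩
    rw [vecOf_lowerPart]
    exact vecOf_mul_mul_congr hg.2 hh.2
      (isUpperTriangular_diagonal_mul_dotMatrix_sub_XDphi hDσ fun i j _ => by simp [φ])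

theorem one_add_matOf_vecOf (A : Matrix (Fin n) (Fin n) K) :
    1 + matOf n K (vecOf n K A) = unitLower A := by
  ext i j
  have hpos : IsPosRoot n ((i : ℕ) + 1, (j : ℕ) + 1) ↔ j < i := by
    simp only [IsPosRoot, Fin.lt_def]
    omega
  simp only [Matrix.add_apply, one_apply, matOf, unitLower, hpos]
  split_ifs with h1 h2 h2
  · exact absurd h2 h1.not_gt
  all_goals simp [vecOf]

theorem vecOf_one_add_matOf (v : PRoot n → K) : vecOf n K (1 + matOf n K v) = v := by
  funext ⟨⟨i, j⟩, hγ⟩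
  obtain ⟨i, rfl⟩ := Nat.exists_eq_add_of_le' (hγ.1.trans hγ.2.1.le)
  obtain ⟨j, rfl⟩ := Nat.exists_eq_add_of_le' hγ.1
  have hne : i ≠ j := (Nat.lt_of_succ_lt_succ hγ.2.1).ne'
  simp [vecOf, matOf, one_apply, hne, hγ]

theorem YwDCell_eq_preimage_bruhatCell :
    YwDCell n K D = (1 + matOf n K ·) ⁻¹' bruhatCell K (wDPerm n D) := by
  have h : wDMat n K D = dotMatrix K (wDPerm n D) := by
    ext i j
    rw [dotMatrix_apply, wDMat, wD_eq_wDPerm_add_one]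
    simp only [Nat.add_right_cancel_iff, Fin.ext_iff]
  ext v
  simp only [YwDCell, h]
  rfl

theorem vanishing_image_bruhatCell [Infinite K] (hσ : IsGreedy σ) :
    vanishing (PRoot n) K (vecOf n K '' bruhatCell K σ) =
      vanishing (PRoot n) K ((1 + matOf n K ·) ⁻¹' bruhatCell K σ) := by
  refine le_antisymm (fun f hf v hv => hf v ⟨_, hv, vecOf_one_add_matOf v⟩) fun f hf => ?_
  rintro _ ⟨A, hA, rfl⟩
  let entry (γ : PRoot n) : Fin n × Fin n :=
    (⟨γ.1.1 - 1, by have := γ.2; unfold IsPosRoot at this; omega⟩,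
      ⟨γ.1.2 - 1, by have := γ.2; unfold IsPosRoot at this; omega⟩)
  have heval (B : Matrix (Fin n) (Fin n) K) :
      (f.rename entry).eval (fun p => B p.1 p.2) = f.eval (vecOf n K B) :=
    MvPolynomial.eval_rename _ _ _
  rw [← heval]
  refine eval_eq_zero_of_mem_bruhatCell hσ (fun B hB => ?_) hA
  rw [heval]
  refine hf _ ?_
  rwa [Set.mem_preimage, one_add_matOf_vecOf]

theorem stmt5_general (n : ℕ) (K : Type) [Field K] [Infinite K]
    (D : Set (ℕ × ℕ)) (hD : IsBasic n D) :
    vanishing (PRoot n) K (VDcell n K D) = vanishing (PRoot n) K (YwDCell n K D) := by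
  rw [VDcell_eq_image_bruhatCell (mem_iff_wDPerm hD), YwDCell_eq_preimage_bruhatCell]
  exact vanishing_image_bruhatCell (isGreedy_wDPerm n D)

end Cells

/-- `I(V_D^∘) = I(Y_{w_D}^∘)`; equivalently, the basic cone `V_D`
(the Zariski closure of the basic cell `V_D^∘`) coincides with `Y_{w_D}`. -/
theorem stmt5 (n : ℕ) (hn : 2 ≤ n) (K : Type) [Field K] [CharZero K]
    (D : Set (ℕ × ℕ)) (hD : IsBasic n D) :
    vanishing (PRoot n) K (VDcell n K D) = vanishing (PRoot n) K (YwDCell n K D) :=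
  stmt5_general n K D hD
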